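/- Let n ≥ 2 be even and Γ = Γ_{A_n}, R = ℂ[u,v]^Γ. Then: (i) there exist anti-Poisson involutions θ₁, θ₂ of R satisfying θ₁(x)=y, θ₁(y)=x, θ₁(z)=z; θ₂(x)=−x, θ₂(y)=y, θ₂(z)=−z; (ii) every anti-Poisson involution of R is conjugate by a graded Poisson automorphism to θ₁ or θ₂; (iii) θ₁ and θ₂ are not conjugate. -/

import Mathlib

/-!
Write `N = n + 1`, an odd number at least `3`. The invariant ring is generated by `x = u ^ N`,
`y = v ^ N`, `z = u v`, subject to `x y = z ^ N`, with `{z, x} = -N x` and `{z, y} = N y`. As `N`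
is odd, degree `2` contains only the multiples of `z` and degree `N` only the combinations of `x`
and `y` (`eq_of_homogeneous_two`, `eq_of_homogeneous_succ`). Hence an anti-Poisson involution `θ`
sends `z` to `c z` with `c = ±1` and acts linearly on the span of `x` and `y`. The brackets with
`z` show that `θ` swaps the lines spanned by `x` and `y` if `c = 1` and preserves both if `c = -1`;
involutivity and `x y = z ^ N` then leave
* `x ↦ a y`, `y ↦ a⁻¹ x`, `z ↦ z`, which is conjugate to `θ₁` by `u ↦ t u`, `v ↦ t⁻¹ v` for a
  suitable `t`;
* `θ₂` itself;
* `x ↦ x`, `y ↦ -y`, `z ↦ -z`, which is conjugate to `θ₂` by `u ↦ v`, `v ↦ -u`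
(`values_of_isAntiPoissonInv`). Since every graded automorphism scales `z`, the sign `c` is a
conjugacy invariant, and it separates `θ₁` from `θ₂`.

All the automorphisms needed are linear substitutions by diagonal or antidiagonal matrices `m`,
which normalize `Γ`; a substitution multiplies the bracket by `det m` (`pb_matSub`).
-/

open MvPolynomial Complex Matrix

noncomputable section

abbrev P2 : Type := MvPolynomial (Fin 2) ℂ

/-- The standard Poisson bracket on `ℂ[u,v]`, where `u = X 0`, `v = X 1`. -/
def pb (f g : P2) : P2 :=
  pderiv 0 f * pderiv 1 g - pderiv 1 f * pderiv 0 g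

/-- The algebra endomorphism of `ℂ[u,v]` given by the linear substitution
`X i ↦ ∑ j, m i j • X j`. -/
def matSub (m : Matrix (Fin 2) (Fin 2) ℂ) : P2 →ₐ[ℂ] P2 :=
  aeval fun i => ∑ j, MvPolynomial.C (m i j) * X j

abbrev SL2 : Type := Matrix.SpecialLinearGroup (Fin 2) ℂ

/-- The action of `g ∈ SL₂(ℂ)` on polynomials: `(g · f)(w) = f (g⁻¹ w)`. -/
def slAct (g : SL2) : P2 →ₐ[ℂ] P2 := matSub (↑(g⁻¹))

/-- The invariant ring `ℂ[u,v]^Γ` as a subalgebra of `ℂ[u,v]`. -/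
def invRing (Γ : Subgroup SL2) : Subalgebra ℂ P2 :=
  ⨅ g : Γ, AlgHom.equalizer (slAct (g : SL2)) (AlgHom.id ℂ P2)

/-- `θ` is a graded algebra automorphism: it preserves homogeneous elements of each degree. -/
def IsGradedAut (Γ : Subgroup SL2) (θ : invRing Γ ≃ₐ[ℂ] invRing Γ) : Prop :=
  ∀ (d : ℕ) (f : invRing Γ), (f : P2).IsHomogeneous d → ((θ f : invRing Γ) : P2).IsHomogeneous d

/-- `θ` is an anti-Poisson involution: a graded algebra automorphism with `θ ∘ θ = id`
and `θ {f, g} = -{θ f, θ g}` (the bracket condition is stated on underlying polynomials,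
for every element `h` of the invariant ring whose underlying polynomial is `{f, g}`). -/
def IsAntiPoissonInv (Γ : Subgroup SL2) (θ : invRing Γ ≃ₐ[ℂ] invRing Γ) : Prop :=
  IsGradedAut Γ θ ∧ (∀ f, θ (θ f) = f) ∧
    ∀ f g h : invRing Γ, (h : P2) = pb (f : P2) (g : P2) →
      ((θ h : invRing Γ) : P2) = - pb ((θ f : invRing Γ) : P2) ((θ g : invRing Γ) : P2)

/-- `σ` is a graded Poisson automorphism. -/
def IsGradedPoissonAut (Γ : Subgroup SL2) (σ : invRing Γ ≃ₐ[ℂ] invRing Γ) : Prop :=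
  IsGradedAut Γ σ ∧
    ∀ f g h : invRing Γ, (h : P2) = pb (f : P2) (g : P2) →
      ((σ h : invRing Γ) : P2) = pb ((σ f : invRing Γ) : P2) ((σ g : invRing Γ) : P2)

/-- `θ'` is conjugate to `θ` by a graded Poisson automorphism: `θ' = σ ∘ θ ∘ σ⁻¹`. -/
def APIConj (Γ : Subgroup SL2) (θ θ' : invRing Γ ≃ₐ[ℂ] invRing Γ) : Prop :=
  ∃ σ : invRing Γ ≃ₐ[ℂ] invRing Γ, IsGradedPoissonAut Γ σ ∧ ∀ f, θ' f = σ (θ (σ.symm f))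

/-- `θ` takes the values `x' y' z'` on `x y z`. -/
def Vals (Γ : Subgroup SL2) (θ : invRing Γ ≃ₐ[ℂ] invRing Γ)
    (x y z x' y' z' : invRing Γ) : Prop :=
  θ x = x' ∧ θ y = y' ∧ θ z = z'

/-- The ideal `J_θ` generated by all `θ f - f`. -/
def Jideal (Γ : Subgroup SL2) (θ : invRing Γ ≃ₐ[ℂ] invRing Γ) : Ideal (invRing Γ) :=
  Ideal.span (Set.range fun f => θ f - f)


/-! ### Linear substitutions -/

lemma matSub_X (m : Matrix (Fin 2) (Fin 2) ℂ) (i : Fin 2) :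
    matSub m (X i) = C (m i 0) * X 0 + C (m i 1) * X 1 := by
  simp [matSub, Fin.sum_univ_two]

/-- Substitution is contravariant in the matrix. -/
lemma matSub_matSub (m m' : Matrix (Fin 2) (Fin 2) ℂ) (f : P2) :
    matSub m (matSub m' f) = matSub (m' * m) f := by
  have h : (matSub m).comp (matSub m') = matSub (m' * m) := by
    refine MvPolynomial.algHom_ext fun i => ?_
    have hC : ∀ c : ℂ, matSub m (C c) = C c := fun c => (matSub m).commutes c
    simp only [AlgHom.comp_apply, matSub_X, map_add, map_mul, hC, Matrix.mul_apply,
      Fin.sum_univ_two]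
    ring
  exact DFunLike.congr_fun h f

lemma matSub_one (f : P2) : matSub 1 f = f := by
  have h : matSub 1 = AlgHom.id ℂ P2 := by
    refine MvPolynomial.algHom_ext fun i => ?_
    fin_cases i <;> simp [matSub_X]
  simp [h]

lemma matSub_isHomogeneous (m : Matrix (Fin 2) (Fin 2) ℂ) {f : P2} {d : ℕ}
    (hf : f.IsHomogeneous d) : (matSub m f).IsHomogeneous d := by
  have := hf.aeval (fun i => ∑ j, C (m i j) * X j : Fin 2 → P2) (n := 1)
    (fun i => IsHomogeneous.sum _ _ _ fun j _ => isHomogeneous_C_mul_X _ _)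
  simpa [matSub] using this

/-- Chain rule. -/
lemma pderiv_matSub (m : Matrix (Fin 2) (Fin 2) ℂ) (j : Fin 2) (f : P2) :
    pderiv j (matSub m f) =
      C (m 0 j) * matSub m (pderiv 0 f) + C (m 1 j) * matSub m (pderiv 1 f) := by
  have hC : ∀ c : ℂ, matSub m (C c) = C c := fun c => (matSub m).commutes c
  induction f using MvPolynomial.induction_on with
  | C a => simp [hC]
  | add p q hp hq => simp only [map_add, hp, hq]; ring
  | mul_X p i hp =>
    simp only [map_mul, Derivation.leibniz, smul_eq_mul, map_add, hp, matSub_X]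
    fin_cases j <;> fin_cases i <;> simp [pderiv_X] <;> ring

/-- A linear substitution scales the bracket by its determinant. -/
lemma pb_matSub (m : Matrix (Fin 2) (Fin 2) ℂ) (f g : P2) :
    pb (matSub m f) (matSub m g) = C m.det * matSub m (pb f g) := by
  simp only [pb, pderiv_matSub, Matrix.det_fin_two, map_sub, map_mul]
  ring

lemma coeff_matSub_diag (a b : ℂ) (f : P2) (d : Fin 2 →₀ ℕ) :
    coeff d (matSub !![a, 0; 0, b] f) = a ^ d 0 * b ^ d 1 * coeff d f := by
  induction f using MvPolynomial.induction_on' with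
  | monomial s c =>
    have : matSub !![a, 0; 0, b] (monomial s c) = C (a ^ s 0 * b ^ s 1) * monomial s c := by
      conv_rhs => rw [monomial_eq]
      rw [matSub, aeval_monomial, Finsupp.prod_fintype _ _ (by simp),
        Finsupp.prod_fintype _ _ (by simp)]
      simp [Fin.sum_univ_two, mul_pow, algebraMap_eq]
      ring
    rw [this, coeff_C_mul, coeff_monomial]
    split_ifs with h <;> simp [h]
  | add p q hp hq => simp only [map_add, coeff_add, hp, hq]; ring

/-! ### Substitutions acting on the invariant ring -/

lemma mem_invRing_iff (Γ : Subgroup SL2) (f : P2) :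
    f ∈ invRing Γ ↔ ∀ g ∈ Γ, matSub (g : Matrix (Fin 2) (Fin 2) ℂ) f = f := by
  simp only [invRing, Algebra.mem_iInf, AlgHom.mem_equalizer, slAct, AlgHom.id_apply]
  constructor
  · intro h g hg
    simpa using h ⟨g⁻¹, Γ.inv_mem hg⟩
  · intro h g
    exact h _ (Γ.inv_mem g.2)

/-- A substitution whose matrix normalizes `Γ` preserves the invariants. -/
lemma matSub_mem_invRing (Γ : Subgroup SL2) (m : Matrix (Fin 2) (Fin 2) ℂ)
    (hm : ∀ g ∈ Γ, ∃ g' ∈ Γ, m * (g : Matrix (Fin 2) (Fin 2) ℂ) = g' * m) {f : P2}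
    (hf : f ∈ invRing Γ) : matSub m f ∈ invRing Γ := by
  rw [mem_invRing_iff] at hf ⊢
  intro g hg
  obtain ⟨g', hg', h⟩ := hm g hg
  rw [matSub_matSub, h, ← matSub_matSub, hf g' hg']

/-- An invertible matrix which, together with its inverse, normalizes `Γ` induces an automorphism
of the invariant ring. -/
lemma exists_equiv (Γ : Subgroup SL2) (m m' : Matrix (Fin 2) (Fin 2) ℂ)
    (hm : ∀ g ∈ Γ, ∃ g' ∈ Γ, m * (g : Matrix (Fin 2) (Fin 2) ℂ) = g' * m)
    (hm' : ∀ g ∈ Γ, ∃ g' ∈ Γ, m' * (g : Matrix (Fin 2) (Fin 2) ℂ) = g' * m')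
    (h : m * m' = 1) :
    ∃ σ : invRing Γ ≃ₐ[ℂ] invRing Γ, ∀ f, ((σ f : invRing Γ) : P2) = matSub m f := by
  have h' : m' * m = 1 := mul_eq_one_comm.mp h
  refine ⟨AlgEquiv.ofAlgHom
    (((matSub m).comp (invRing Γ).val).codRestrict _ fun f => matSub_mem_invRing Γ m hm f.2)
    (((matSub m').comp (invRing Γ).val).codRestrict _ fun f => matSub_mem_invRing Γ m' hm' f.2)
    ?_ ?_, fun f => rfl⟩
  · ext1 f
    refine Subtype.ext ?_
    change matSub m (matSub m' f) = f
    rw [matSub_matSub, h', matSub_one]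
  · ext1 f
    refine Subtype.ext ?_
    change matSub m' (matSub m f) = f
    rw [matSub_matSub, h, matSub_one]

/-! ### The invariant ring of the cyclic group -/

lemma diag_normalizes {n : ℕ} {Γ : Subgroup SL2}
    (hΓ : ∀ g : SL2, g ∈ Γ ↔ ∃ ε : ℂ, ε ^ (n + 1) = 1 ∧
      (g : Matrix (Fin 2) (Fin 2) ℂ) = !![ε, 0; 0, ε⁻¹])
    (a b : ℂ) : ∀ g ∈ Γ, ∃ g' ∈ Γ,
    !![a, 0; 0, b] * (g : Matrix (Fin 2) (Fin 2) ℂ) = g' * !![a, 0; 0, b] := by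
  intro g hg
  obtain ⟨ε, -, h⟩ := (hΓ g).1 hg
  refine ⟨g, hg, ?_⟩
  rw [h]
  simp [mul_comm]

lemma antidiag_normalizes {n : ℕ} {Γ : Subgroup SL2}
    (hΓ : ∀ g : SL2, g ∈ Γ ↔ ∃ ε : ℂ, ε ^ (n + 1) = 1 ∧
      (g : Matrix (Fin 2) (Fin 2) ℂ) = !![ε, 0; 0, ε⁻¹])
    (a b : ℂ) : ∀ g ∈ Γ, ∃ g' ∈ Γ,
    !![0, a; b, 0] * (g : Matrix (Fin 2) (Fin 2) ℂ) = g' * !![0, a; b, 0] := by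
  intro g hg
  obtain ⟨ε, -, h⟩ := (hΓ g).1 hg
  refine ⟨g⁻¹, Γ.inv_mem hg, ?_⟩
  rw [Matrix.SpecialLinearGroup.coe_inv, h, Matrix.adjugate_fin_two_of]
  simp [mul_comm]

/-- The monomials `uᵃ vᵇ` occurring in an invariant satisfy `a ≡ b` modulo `n + 1`. -/
lemma dvd_of_coeff_ne_zero {n : ℕ} {Γ : Subgroup SL2}
    (hΓ : ∀ g : SL2, g ∈ Γ ↔ ∃ ε : ℂ, ε ^ (n + 1) = 1 ∧
      (g : Matrix (Fin 2) (Fin 2) ℂ) = !![ε, 0; 0, ε⁻¹])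
    {f : P2} (hf : f ∈ invRing Γ) {d : Fin 2 →₀ ℕ}
    (hd : coeff d f ≠ 0) : ((n + 1 : ℕ) : ℤ) ∣ (d 0 : ℤ) - d 1 := by
  have hp := Complex.isPrimitiveRoot_exp (n + 1) (Nat.succ_ne_zero n)
  set ε := Complex.exp (2 * Real.pi * Complex.I / ((n + 1 : ℕ) : ℂ)) with hε
  have hε0 : ε ≠ 0 := Complex.exp_ne_zero _
  let g : SL2 := ⟨!![ε, 0; 0, ε⁻¹], by simp [Matrix.det_fin_two, hε0]⟩
  have hg : g ∈ Γ := (hΓ g).2 ⟨ε, hp.pow_eq_one, rfl⟩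
  have h := congrArg (coeff d) ((mem_invRing_iff Γ f).1 hf g hg)
  change coeff d (matSub !![ε, 0; 0, ε⁻¹] f) = _ at h
  rw [coeff_matSub_diag] at h
  have h1 : ε ^ d 0 * ε⁻¹ ^ d 1 = 1 := mul_right_cancel₀ hd (by rw [h, one_mul])
  rw [← hp.zpow_eq_one_iff_dvd, zpow_sub₀ hε0, zpow_natCast, zpow_natCast, ← h1, inv_pow,
    div_eq_mul_inv]

/-- The invariant ring is generated by `x`, `y` and `z`. -/
lemma mem_adjoin {n : ℕ} {Γ : Subgroup SL2}
    (hΓ : ∀ g : SL2, g ∈ Γ ↔ ∃ ε : ℂ, ε ^ (n + 1) = 1 ∧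
      (g : Matrix (Fin 2) (Fin 2) ℂ) = !![ε, 0; 0, ε⁻¹])
    {f : P2} (hf : f ∈ invRing Γ) :
    f ∈ Algebra.adjoin ℂ ({X 0 ^ (n + 1), X 1 ^ (n + 1), X 0 * X 1} : Set P2) := by
  set A := Algebra.adjoin ℂ ({X 0 ^ (n + 1), X 1 ^ (n + 1), X 0 * X 1} : Set P2) with hA
  have hx : (X 0 : P2) ^ (n + 1) ∈ A := Algebra.subset_adjoin (by simp)
  have hy : (X 1 : P2) ^ (n + 1) ∈ A := Algebra.subset_adjoin (by simp)
  have hz : (X 0 * X 1 : P2) ∈ A := Algebra.subset_adjoin (by simp)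
  rw [f.as_sum]
  refine A.sum_mem fun d hd => ?_
  have hdvd := dvd_of_coeff_ne_zero hΓ hf (mem_support_iff.1 hd)
  rw [monomial_eq, Finsupp.prod_fintype _ _ (by simp), Fin.prod_univ_two]
  refine A.mul_mem (A.algebraMap_mem _) ?_
  rcases le_total (d 1) (d 0) with h | h
  · rw [← Nat.cast_sub h, Int.natCast_dvd_natCast] at hdvd
    obtain ⟨k, hk⟩ := hdvd
    rw [show d 0 = (n + 1) * k + d 1 by omega, pow_add, pow_mul, mul_assoc, ← mul_pow]
    exact A.mul_mem (A.pow_mem hx _) (A.pow_mem hz _)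
  · rw [← dvd_neg, neg_sub, ← Nat.cast_sub h, Int.natCast_dvd_natCast] at hdvd
    obtain ⟨k, hk⟩ := hdvd
    rw [show d 1 = d 0 + (n + 1) * k by omega, pow_add, pow_mul, ← mul_assoc, ← mul_pow]
    exact A.mul_mem (A.pow_mem hz _) (A.pow_mem hy _)

/-- Algebra endomorphisms of the invariant ring are determined by their values on `x`, `y`, `z`. -/
lemma algHom_ext_xyz {n : ℕ} {Γ : Subgroup SL2}
    (hΓ : ∀ g : SL2, g ∈ Γ ↔ ∃ ε : ℂ, ε ^ (n + 1) = 1 ∧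
      (g : Matrix (Fin 2) (Fin 2) ℂ) = !![ε, 0; 0, ε⁻¹])
    (hx : (X 0 : P2) ^ (n + 1) ∈ invRing Γ)
    (hy : (X 1 : P2) ^ (n + 1) ∈ invRing Γ) (hz : (X 0 * X 1 : P2) ∈ invRing Γ)
    {F G : invRing Γ →ₐ[ℂ] invRing Γ} (h1 : F ⟨_, hx⟩ = G ⟨_, hx⟩)
    (h2 : F ⟨_, hy⟩ = G ⟨_, hy⟩) (h3 : F ⟨_, hz⟩ = G ⟨_, hz⟩) : F = G := by
  ext1 f
  have hle : Algebra.adjoin ℂ ({X 0 ^ (n + 1), X 1 ^ (n + 1), X 0 * X 1} : Set P2) ≤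
      (AlgHom.equalizer F G).map (invRing Γ).val := by
    refine Algebra.adjoin_le ?_
    rintro p (rfl | rfl | rfl)
    exacts [⟨_, h1, rfl⟩, ⟨_, h2, rfl⟩, ⟨_, h3, rfl⟩]
  obtain ⟨e, he, hef⟩ := hle (mem_adjoin hΓ f.2)
  rw [← Subtype.ext (a1 := e) (a2 := f) hef]
  exact he

/-- In degree two the only invariants are the multiples of `z`: since `n + 1 > 2`, the exponents
of an invariant monomial of degree two must agree. -/
lemma eq_of_homogeneous_two {n : ℕ} {Γ : Subgroup SL2}
    (hΓ : ∀ g : SL2, g ∈ Γ ↔ ∃ ε : ℂ, ε ^ (n + 1) = 1 ∧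
      (g : Matrix (Fin 2) (Fin 2) ℂ) = !![ε, 0; 0, ε⁻¹])
    (hn : 2 ≤ n) {f : P2} (hf : f ∈ invRing Γ)
    (h2 : f.IsHomogeneous 2) : ∃ c : ℂ, f = c • (X 0 * X 1) := by
  refine ⟨coeff (Finsupp.single 0 1 + Finsupp.single 1 1) f, ?_⟩
  have hm : (X 0 * X 1 : P2) = monomial (Finsupp.single 0 1 + Finsupp.single 1 1) 1 := by
    simp [X, monomial_mul]
  ext d
  rw [hm, coeff_smul, coeff_monomial]
  split_ifs with h
  · simp [h]
  · rw [smul_zero]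
    by_contra hd
    have hdeg := h2 hd
    obtain ⟨k, hk⟩ := dvd_of_coeff_ne_zero hΓ hf hd
    simp only [Finsupp.weight_apply, Finsupp.sum_fintype, Fin.sum_univ_two, Pi.one_apply,
      smul_eq_mul, mul_one, implies_true] at hdeg
    apply h
    have hk0 : k = 0 := by
      by_contra hk0
      have := Int.le_of_dvd (a := ((n + 1 : ℕ) : ℤ)) (b := |(d 0 : ℤ) - d 1|) (by
        rw [hk]; positivity) (by rw [dvd_abs, hk]; exact dvd_mul_right _ _)
      have : |(d 0 : ℤ) - d 1| ≤ 2 := by rw [abs_le]; omega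
      omega
    subst hk0
    ext i
    fin_cases i <;> simp <;> omega

/-- The exponents of an invariant monomial of degree `n + 1` differ by a multiple of `n + 1` which
is not zero, since `n + 1` is odd; so the monomial is `x` or `y`. -/
lemma eq_of_homogeneous_succ {n : ℕ} {Γ : Subgroup SL2}
    (hΓ : ∀ g : SL2, g ∈ Γ ↔ ∃ ε : ℂ, ε ^ (n + 1) = 1 ∧
      (g : Matrix (Fin 2) (Fin 2) ℂ) = !![ε, 0; 0, ε⁻¹])
    (heven : Even n) {f : P2} (hf : f ∈ invRing Γ)
    (h2 : f.IsHomogeneous (n + 1)) :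
    ∃ a b : ℂ, f = a • X 0 ^ (n + 1) + b • X 1 ^ (n + 1) := by
  refine ⟨coeff (Finsupp.single 0 (n + 1)) f, coeff (Finsupp.single 1 (n + 1)) f, ?_⟩
  ext d
  rw [coeff_add, coeff_smul, coeff_smul, coeff_X_pow, coeff_X_pow]
  by_cases hd : coeff d f = 0
  · rw [hd]
    split_ifs with h h' h' <;> simp_all
  · have hdeg := h2 hd
    obtain ⟨k, hk⟩ := dvd_of_coeff_ne_zero hΓ hf hd
    simp only [Finsupp.weight_apply, Finsupp.sum_fintype, Fin.sum_univ_two, Pi.one_apply,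
      smul_eq_mul, mul_one, implies_true] at hdeg
    have hk0 : k ≠ 0 := by
      rintro rfl
      obtain ⟨r, hr⟩ := heven
      omega
    have hcase : (d 0 = n + 1 ∧ d 1 = 0) ∨ (d 0 = 0 ∧ d 1 = n + 1) := by
      rcases lt_or_gt_of_ne hk0 with h | h
      · right
        have : ((n + 1 : ℕ) : ℤ) * k ≤ ((n + 1 : ℕ) : ℤ) * (-1) := by gcongr; omega
        omega
      · left
        have : ((n + 1 : ℕ) : ℤ) * 1 ≤ ((n + 1 : ℕ) : ℤ) * k := by gcongr; omega
        omega
    rcases hcase with ⟨h0, h1⟩ | ⟨h0, h1⟩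
    · have : d = Finsupp.single 0 (n + 1) := by ext i; fin_cases i <;> simp [h0, h1]
      subst this
      have hne : ¬ (Finsupp.single (1 : Fin 2) (n + 1) = Finsupp.single 0 (n + 1)) := by
        intro h; simpa using DFunLike.congr_fun h 0
      rw [if_pos rfl, if_neg hne]
      simp
    · have : d = Finsupp.single 1 (n + 1) := by ext i; fin_cases i <;> simp [h0, h1]
      subst this
      have hne : ¬ (Finsupp.single (0 : Fin 2) (n + 1) = Finsupp.single 1 (n + 1)) := by
        intro h; simpa using DFunLike.congr_fun h 0
      rw [if_pos rfl, if_neg hne]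
      simp


/-! ### Graded Poisson and anti-Poisson automorphisms -/

lemma isGradedAut_of_matSub {Γ : Subgroup SL2} {m : Matrix (Fin 2) (Fin 2) ℂ}
    {σ : invRing Γ ≃ₐ[ℂ] invRing Γ} (h : ∀ f, ((σ f : invRing Γ) : P2) = matSub m f) :
    IsGradedAut Γ σ := by
  intro d f hf
  rw [h]
  exact matSub_isHomogeneous m hf

lemma isGradedPoissonAut_of_matSub {Γ : Subgroup SL2} {m : Matrix (Fin 2) (Fin 2) ℂ}
    (hdet : m.det = 1) {σ : invRing Γ ≃ₐ[ℂ] invRing Γ}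
    (h : ∀ f, ((σ f : invRing Γ) : P2) = matSub m f) : IsGradedPoissonAut Γ σ := by
  refine ⟨isGradedAut_of_matSub h, fun f g k hk => ?_⟩
  rw [h, h, h, pb_matSub, hdet, hk]
  simp

lemma isAntiPoissonInv_of_matSub {Γ : Subgroup SL2} {m : Matrix (Fin 2) (Fin 2) ℂ}
    (hdet : m.det = -1) (hm : m * m = 1) {σ : invRing Γ ≃ₐ[ℂ] invRing Γ}
    (h : ∀ f, ((σ f : invRing Γ) : P2) = matSub m f) : IsAntiPoissonInv Γ σ := by
  refine ⟨isGradedAut_of_matSub h, fun f => ?_, fun f g k hk => ?_⟩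
  · refine Subtype.ext ?_
    rw [h, h, matSub_matSub, hm, matSub_one]
  · rw [h, h, h, pb_matSub, hdet, hk]
    simp

lemma matSub_diag_X (a b : ℂ) : matSub !![a, 0; 0, b] (X 0) = a • X 0 ∧
    matSub !![a, 0; 0, b] (X 1) = b • X 1 := by
  constructor <;> simp [matSub_X, smul_eq_C_mul]

lemma matSub_antidiag_X (a b : ℂ) : matSub !![0, a; b, 0] (X 0) = a • X 1 ∧
    matSub !![0, a; b, 0] (X 1) = b • X 0 := by
  constructor <;> simp [matSub_X, smul_eq_C_mul]

/-- The brackets `{z, x} = -(n + 1) x` and `{z, y} = (n + 1) y`, extended bilinearly. -/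
lemma pb_z_x (n : ℕ) (c a b : ℂ) :
    pb (c • (X 0 * X 1)) (a • X 0 ^ (n + 1) + b • X 1 ^ (n + 1)) =
      (c * (n + 1)) • (-a • X 0 ^ (n + 1) + b • X 1 ^ (n + 1)) := by
  simp only [pb, smul_eq_C_mul]
  simp [pderiv_X, Derivation.leibniz_pow]
  ring

/-- In degree two there is only `z` and in degree `n + 1` only `x` and `y`, so an anti-Poisson
involution acts linearly on these; the brackets `{z, x}`, `{z, y}`, the relation `x y = z ^ (n + 1)`
and involutivity leave two families. -/
lemma values_of_isAntiPoissonInv {n : ℕ} (hn : 2 ≤ n) (heven : Even n) {Γ : Subgroup SL2}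
    (hΓ : ∀ g : SL2, g ∈ Γ ↔ ∃ ε : ℂ, ε ^ (n + 1) = 1 ∧
      (g : Matrix (Fin 2) (Fin 2) ℂ) = !![ε, 0; 0, ε⁻¹])
    (hx : (X 0 : P2) ^ (n + 1) ∈ invRing Γ)
    (hy : (X 1 : P2) ^ (n + 1) ∈ invRing Γ)
    (hz : (X 0 * X 1 : P2) ∈ invRing Γ)
    {θ : invRing Γ ≃ₐ[ℂ] invRing Γ} (hθ : IsAntiPoissonInv Γ θ) :
    let x : invRing Γ := ⟨(X 0 : P2) ^ (n + 1), hx⟩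
    let y : invRing Γ := ⟨(X 1 : P2) ^ (n + 1), hy⟩
    let z : invRing Γ := ⟨(X 0 * X 1 : P2), hz⟩
    (∃ a b : ℂ, a * b = 1 ∧ Vals Γ θ x y z (a • y) (b • x) z) ∨
      Vals Γ θ x y z (-x) y (-z) ∨ Vals Γ θ x y z x (-y) (-z) := by
  intro x y z
  obtain ⟨hgr, hinv, hbr⟩ := hθ
  obtain ⟨c, hc⟩ := eq_of_homogeneous_two hΓ hn (θ z).2
    (hgr 2 z ((isHomogeneous_X ℂ 0).mul (isHomogeneous_X ℂ 1)))
  obtain ⟨a, b, hab⟩ := eq_of_homogeneous_succ hΓ heven (θ x).2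
    (hgr (n + 1) x (by simpa using (isHomogeneous_X ℂ (0 : Fin 2)).pow (n + 1)))
  obtain ⟨a', b', hab'⟩ := eq_of_homogeneous_succ hΓ heven (θ y).2
    (hgr (n + 1) y (by simpa using (isHomogeneous_X ℂ (1 : Fin 2)).pow (n + 1)))
  have hzθ : θ z = c • z := Subtype.ext hc
  have hxθ : θ x = a • x + b • y := Subtype.ext hab
  have hyθ : θ y = a' • x + b' • y := Subtype.ext hab'
  have hN : (n + 1 : ℂ) ≠ 0 := Nat.cast_add_one_ne_zero n
  -- Linear relations between `x` and `y` are read off at the points `(1, 0)` and `(0, 1)`.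
  have hlin : ∀ p q r s : ℂ, p • (X 0 : P2) ^ (n + 1) + q • X 1 ^ (n + 1) =
      r • X 0 ^ (n + 1) + s • X 1 ^ (n + 1) → p = r ∧ q = s := by
    intro p q r s h
    have h0 := congrArg (aeval ![(1 : ℂ), 0]) h
    have h1 := congrArg (aeval ![(0 : ℂ), 1]) h
    simp at h0 h1
    exact ⟨h0, h1⟩
  have hlin' : ∀ p q r s : ℂ, p • x + q • y = r • x + s • y → p = r ∧ q = s :=
    fun p q r s h => hlin p q r s (congrArg Subtype.val h)
  have hbx := hbr z x (-(n + 1 : ℂ) • x) (by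
    have := pb_z_x n 1 1 0
    simp only [one_smul, zero_smul, add_zero, one_mul] at this
    change -(n + 1 : ℂ) • (X 0 : P2) ^ (n + 1) = pb (X 0 * X 1) (X 0 ^ (n + 1))
    rw [this]; module)
  have hby := hbr z y ((n + 1 : ℂ) • y) (by
    have := pb_z_x n 1 0 1
    simp only [one_smul, zero_smul, zero_add, one_mul, neg_zero] at this
    change (n + 1 : ℂ) • (X 1 : P2) ^ (n + 1) = pb (X 0 * X 1) (X 1 ^ (n + 1))
    rw [this])
  rw [map_smul, hc, Subalgebra.coe_smul, hab, pb_z_x] at hbx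
  rw [map_smul, hc, Subalgebra.coe_smul, hab', pb_z_x] at hby
  obtain ⟨e1, e2⟩ := hlin (-(n + 1) * a) (-(n + 1) * b) (c * (n + 1) * a) (-c * (n + 1) * b)
    (by convert hbx using 1 <;> module)
  obtain ⟨e3, e4⟩ := hlin ((n + 1) * a') ((n + 1) * b') (c * (n + 1) * a') (-c * (n + 1) * b')
    (by convert hby using 1 <;> module)
  have hxx := hinv x
  rw [hxθ, map_add, map_smul, map_smul, hxθ, hyθ] at hxx
  obtain ⟨i1, -⟩ := hlin' (a * a + b * a') (a * b + b * b') 1 0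
    (by convert hxx using 1 <;> module)
  have hzz := hinv z
  rw [hzθ, map_smul, hzθ, smul_smul] at hzz
  have hcc : c * c = 1 := by
    have := congrArg (fun f : invRing Γ => aeval ![(1 : ℂ), 1] (f : P2)) hzz
    simpa [z] using this
  have hrel : (a + b) * (a' + b') = c ^ (n + 1) := by
    have h : x * y = z ^ (n + 1) := Subtype.ext (by simp [x, y, z, mul_pow])
    have h' := congrArg θ h
    rw [map_mul, map_pow, hxθ, hyθ, hzθ] at h'
    have := congrArg (fun f : invRing Γ => aeval ![(1 : ℂ), 1] (f : P2)) h'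
    simpa [x, y, z] using this
  rcases mul_self_eq_one_iff.1 hcc with rfl | rfl
  · left
    have ha : a = 0 := by
      have : (n + 1 : ℂ) * (2 * a) = 0 := by linear_combination -e1
      simpa [hN] using this
    have hb' : b' = 0 := by
      have : (n + 1 : ℂ) * (2 * b') = 0 := by linear_combination e4
      simpa [hN] using this
    subst ha hb'
    exact ⟨b, a', by linear_combination i1, by rw [hxθ]; module, by rw [hyθ]; module,
      by rw [hzθ]; module⟩
  · right
    have hb : b = 0 := by
      have : (n + 1 : ℂ) * (2 * b) = 0 := by linear_combination -e2
      simpa [hN] using this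
    have ha' : a' = 0 := by
      have : (n + 1 : ℂ) * (2 * a') = 0 := by linear_combination e3
      simpa [hN] using this
    subst hb ha'
    rw [heven.add_one.neg_one_pow] at hrel
    have haa : a * a = 1 := by linear_combination i1
    rcases mul_self_eq_one_iff.1 haa with rfl | rfl
    · right
      have : b' = -1 := by linear_combination hrel
      subst this
      exact ⟨by rw [hxθ]; module, by rw [hyθ]; module, by rw [hzθ]; module⟩
    · left
      have : b' = 1 := by linear_combination -hrel
      subst this
      exact ⟨by rw [hxθ]; module, by rw [hyθ]; module, by rw [hzθ]; module⟩

/-- classification of anti-Poisson involutions in type `Aₙ`, `n` even. -/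
theorem stmt1 (n : ℕ) (hn : 2 ≤ n) (heven : Even n) (Γ : Subgroup SL2)
    (hΓ : ∀ g : SL2, g ∈ Γ ↔ ∃ ε : ℂ, ε ^ (n + 1) = 1 ∧
      (g : Matrix (Fin 2) (Fin 2) ℂ) = !![ε, 0; 0, ε⁻¹])
    (hx : (X 0 : P2) ^ (n + 1) ∈ invRing Γ)
    (hy : (X 1 : P2) ^ (n + 1) ∈ invRing Γ)
    (hz : (X 0 * X 1 : P2) ∈ invRing Γ) :
    let x : invRing Γ := ⟨(X 0 : P2) ^ (n + 1), hx⟩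
    let y : invRing Γ := ⟨(X 1 : P2) ^ (n + 1), hy⟩
    let z : invRing Γ := ⟨(X 0 * X 1 : P2), hz⟩
    -- (i) existence of the two anti-Poisson involutions
    ((∃ θ₁, IsAntiPoissonInv Γ θ₁ ∧ Vals Γ θ₁ x y z y x z) ∧
     (∃ θ₂, IsAntiPoissonInv Γ θ₂ ∧ Vals Γ θ₂ x y z (-x) y (-z)) ∧
     -- (ii), (iii)
     ∀ θ₁ θ₂ : invRing Γ ≃ₐ[ℂ] invRing Γ,
       IsAntiPoissonInv Γ θ₁ → Vals Γ θ₁ x y z y x z →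
       IsAntiPoissonInv Γ θ₂ → Vals Γ θ₂ x y z (-x) y (-z) →
         -- (ii) every anti-Poisson involution is conjugate to θ₁ or θ₂
         (∀ θ, IsAntiPoissonInv Γ θ → APIConj Γ θ₁ θ ∨ APIConj Γ θ₂ θ) ∧
         -- (iii) θ₁ and θ₂ are not conjugate
         ¬ APIConj Γ θ₁ θ₂) := by
  intro x y z
  -- Intertwining relations need only be tested on the generators.
  have hconj : ∀ {m : Matrix (Fin 2) (Fin 2) ℂ} {σ θ θ' : invRing Γ ≃ₐ[ℂ] invRing Γ},
      m.det = 1 → (∀ f, ((σ f : invRing Γ) : P2) = matSub m f) →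
      θ' (σ x) = σ (θ x) → θ' (σ y) = σ (θ y) → θ' (σ z) = σ (θ z) → APIConj Γ θ θ' := by
    intro m σ θ θ' hdet hσ h1 h2 h3
    refine ⟨σ, isGradedPoissonAut_of_matSub hdet hσ, fun f => ?_⟩
    have h := algHom_ext_xyz hΓ hx hy hz
      (F := (θ' : invRing Γ →ₐ[ℂ] invRing Γ).comp (σ : invRing Γ →ₐ[ℂ] invRing Γ))
      (G := (σ : invRing Γ →ₐ[ℂ] invRing Γ).comp (θ : invRing Γ →ₐ[ℂ] invRing Γ)) h1 h2 h3
    simpa using DFunLike.congr_fun h (σ.symm f)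
  refine ⟨?_, ?_, fun θ₁ θ₂ h₁ v₁ h₂ v₂ => ⟨fun θ hθ => ?_, ?_⟩⟩
  · have hm : (!![0, 1; 1, 0] : Matrix (Fin 2) (Fin 2) ℂ) * !![0, 1; 1, 0] = 1 := by
      simp [Matrix.one_fin_two]
    obtain ⟨σ, hσ⟩ := exists_equiv Γ _ _ (antidiag_normalizes hΓ 1 1)
      (antidiag_normalizes hΓ 1 1) hm
    have hX := matSub_antidiag_X 1 1
    refine ⟨σ, isAntiPoissonInv_of_matSub (by simp) hm hσ, ?_, ?_, ?_⟩ <;>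
      refine Subtype.ext ?_ <;> rw [hσ] <;> simp [x, y, z, hX, mul_comm]
  · have hm : (!![-1, 0; 0, 1] : Matrix (Fin 2) (Fin 2) ℂ) * !![-1, 0; 0, 1] = 1 := by
      simp [Matrix.one_fin_two]
    obtain ⟨σ, hσ⟩ := exists_equiv Γ _ _ (diag_normalizes hΓ (-1) 1)
      (diag_normalizes hΓ (-1) 1) hm
    have hX := matSub_diag_X (-1) 1
    refine ⟨σ, isAntiPoissonInv_of_matSub (by simp) hm hσ, ?_, ?_, ?_⟩ <;>
      refine Subtype.ext ?_ <;> rw [hσ] <;> simp [x, y, z, hX, heven.add_one.neg_pow]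
  · obtain ⟨v1x, v1y, v1z⟩ := v₁
    obtain ⟨v2x, v2y, v2z⟩ := v₂
    rcases values_of_isAntiPoissonInv hn heven hΓ hx hy hz hθ with
      ⟨a, b, hab, vx, vy, vz⟩ | ⟨vx, vy, vz⟩ | ⟨vx, vy, vz⟩
    · left
      -- Conjugating `θ₁` by `u ↦ t u`, `v ↦ t⁻¹ v` scales `x ↦ y` by `t ^ (-2 (n + 1))`.
      obtain ⟨t, ht⟩ := IsAlgClosed.exists_pow_nat_eq b (n := 2 * (n + 1)) (by omega)
      have hb0 : b ≠ 0 := right_ne_zero_of_mul_eq_one hab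
      have ht0 : t ≠ 0 := by
        rintro rfl
        exact hb0 (by rw [← ht]; simp)
      obtain ⟨σ, hσ⟩ := exists_equiv Γ _ _ (diag_normalizes hΓ t t⁻¹)
        (diag_normalizes hΓ t⁻¹ t) (by simp [Matrix.one_fin_two, ht0])
      have hX := matSub_diag_X t t⁻¹
      have sx : σ x = t ^ (n + 1) • x := Subtype.ext (by rw [hσ]; simp [x, hX, smul_pow])
      have sy : σ y = (t ^ (n + 1))⁻¹ • y :=
        Subtype.ext (by rw [hσ]; simp [y, hX, smul_pow])
      have sz : σ z = z := Subtype.ext (by rw [hσ]; simp [z, hX, ht0])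
      have hs0 : t ^ (n + 1) ≠ 0 := pow_ne_zero _ ht0
      have hs : t ^ (n + 1) * t ^ (n + 1) = b := by rw [← ht]; ring
      refine hconj (by simp [ht0]) hσ ?_ ?_ ?_
      · rw [v1x, sx, sy, map_smul, vx, smul_smul]
        congr 1
        field_simp
        linear_combination hab + a * hs
      · rw [v1y, sx, sy, map_smul, vy, smul_smul]
        congr 1
        field_simp
        linear_combination -hs
      · rw [v1z, sz, vz]
    · right
      refine hconj (m := 1) (σ := AlgEquiv.refl) (by simp) (fun f => (matSub_one _).symm)
        ?_ ?_ ?_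
      · exact vx.trans v2x.symm
      · exact vy.trans v2y.symm
      · exact vz.trans v2z.symm
    · right
      -- `u ↦ v`, `v ↦ -u` exchanges the roles of `x` and `y`.
      obtain ⟨σ, hσ⟩ := exists_equiv Γ _ _ (antidiag_normalizes hΓ 1 (-1))
        (antidiag_normalizes hΓ (-1) 1) (by simp [Matrix.one_fin_two])
      have hX := matSub_antidiag_X 1 (-1)
      have sx : σ x = y := Subtype.ext (by rw [hσ]; simp [x, y, hX])
      have sy : σ y = -x :=
        Subtype.ext (by rw [hσ]; simp [x, y, hX, heven.add_one.neg_pow])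
      have sz : σ z = -z := Subtype.ext (by rw [hσ]; simp [z, hX, mul_comm])
      refine hconj (by simp) hσ ?_ ?_ ?_
      · rw [v2x, sx, vy, map_neg, sx]
      · rw [v2y, sy, map_neg, vx]
      · rw [v2z, sz, map_neg, map_neg, vz, sz]
  · -- Every graded automorphism scales `z`, whose eigenvalue is `1` for `θ₁` and `-1` for `θ₂`.
    rintro ⟨σ, ⟨hgr, -⟩, h⟩
    obtain ⟨c, hc⟩ := eq_of_homogeneous_two hΓ hn (σ z).2
      (hgr 2 z ((isHomogeneous_X ℂ 0).mul (isHomogeneous_X ℂ 1)))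
    have hσz : σ z = c • z := Subtype.ext hc
    have h1 : θ₂ (σ z) = σ z := by rw [h, σ.symm_apply_apply, v₁.2.2]
    have h2 : θ₂ (σ z) = -σ z := by rw [hσz, map_smul, v₂.2.2, smul_neg]
    have h3 : σ z = 0 := self_eq_neg.1 (h1.symm.trans h2)
    have h4 : z = 0 := (map_eq_zero_iff σ σ.injective).1 h3
    have h5 : (X 0 * X 1 : P2) = 0 := congrArg Subtype.val h4
    simp [X_ne_zero] at h5
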